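/- For every L ≥ 0, the numbers m_L satisfy the reflection relation m_L = Σ_{s=0}^{L} C(L,s) · (−1)^s · m_s, where C(L,s) is the binomial coefficient; equivalently ∫ (x/(x+1))^L dμ(x) = ∫ (x+1)^(−L) dμ(x). In particular m_0 = 1 and m_1 = 1/2. -/

import Mathlib

open Filter

/-- The generations of the Calkin–Wilf tree: `CW 0 = [1/1]` is the first
generation, and each generation is obtained from the previous one by replacing
each entry `x` by `x/(x+1)` and `x+1`, in this order.  Thus the `n`-th
generation of the paper is `CW (n-1)`. -/
def CW : ℕ → List ℚ
  | 0 => [1]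
  | n + 1 => (CW n).flatMap (fun x => [x / (x + 1), x + 1])

open scoped Classical in
/-- `Fcw n` is the distribution function of the `(n+1)`-st generation of the
Calkin–Wilf tree: `Fcw (n-1) x = F_n(x) = 2^(1-n) · #{j : x_j^(n) ≤ x}`. -/
noncomputable def Fcw (n : ℕ) (x : ℝ) : ℝ :=
  ((CW n).countP (fun q => decide ((q : ℝ) ≤ x))) / 2 ^ n

open MeasureTheory


lemma CW_pos (n : ℕ) : ∀ q ∈ CW n, 0 < q := by
  induction n with
  | zero => simp [CW]
  | succ n ih =>
    intro q hq
    simp only [CW, List.mem_flatMap, List.mem_cons, List.not_mem_nil, or_false] at hq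
    obtain ⟨x, hx, h⟩ := hq
    have := ih x hx
    rcases h with h | h <;> rw [h] <;> positivity

lemma countP_flat (l : List ℚ) (p : ℚ → Bool) :
    (l.flatMap (fun x => [x / (x + 1), x + 1])).countP p =
      l.countP (fun x => p (x / (x + 1))) + l.countP (fun x => p (x + 1)) := by
  induction l with
  | nil => simp
  | cons a l ih =>
    simp only [List.flatMap_cons, List.countP_append, ih, List.countP_cons, List.countP_nil]
    omega

lemma CW_length (n : ℕ) : (CW n).length = 2 ^ n := by
  induction n with
  | zero => simp [CW]
  | succ n ih => simp [CW, List.length_flatMap, ih, pow_succ]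

open scoped Classical in
lemma Fcw_eq (n : ℕ) (x : ℝ) :
    Fcw n x = ((CW n).countP (fun q : ℚ => decide ((q : ℝ) ≤ x)) : ℕ) / 2 ^ n := by
  unfold Fcw
  have : ∀ l : List ℚ, (do let a ← l; pure (a : ℝ)) = l.map (fun q : ℚ => (q : ℝ)) := by
    intro l
    exact List.flatMap_singleton' (l.map (fun q : ℚ => (q : ℝ))) |>.symm ▸ by
      simp [List.map_eq_flatMap]
  rw [this, List.countP_map]
  rfl

lemma Fcw_ge_one (n : ℕ) (x : ℝ) (hx : 1 ≤ x) :
    Fcw (n + 1) x = (1 + Fcw n (x - 1)) / 2 := by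
  classical
  have h1 : (CW n).countP (fun q : ℚ => decide (((q / (q + 1) : ℚ) : ℝ) ≤ x)) = 2 ^ n := by
    rw [← CW_length n, List.countP_eq_length]
    intro q hq
    have h0 : (0 : ℝ) < q := by exact_mod_cast CW_pos n q hq
    simp only [decide_eq_true_eq]
    push_cast
    rw [div_le_iff₀ (by linarith)]
    nlinarith
  have h2 : (CW n).countP (fun q : ℚ => decide (((q + 1 : ℚ) : ℝ) ≤ x)) =
      (CW n).countP (fun q : ℚ => decide ((q : ℝ) ≤ x - 1)) := by
    apply List.countP_congr
    intro q hq
    simp only [decide_eq_true_eq]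
    push_cast
    constructor <;> intro h <;> linarith
  simp only [Fcw_eq]
  rw [CW, countP_flat]
  rw [h1, h2]
  push_cast
  field_simp
  ring

lemma Fcw_lt_one (n : ℕ) (x : ℝ) (hx : x < 1) :
    Fcw (n + 1) x = Fcw n (x / (1 - x)) / 2 := by
  classical
  have h1 : (CW n).countP (fun q : ℚ => decide (((q / (q + 1) : ℚ) : ℝ) ≤ x)) =
      (CW n).countP (fun q : ℚ => decide ((q : ℝ) ≤ x / (1 - x))) := by
    apply List.countP_congr
    intro q hq
    have h0 : (0 : ℝ) < q := by exact_mod_cast CW_pos n q hq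
    simp only [decide_eq_true_eq]
    push_cast
    rw [div_le_iff₀ (by linarith), le_div_iff₀ (by linarith)]
    constructor <;> intro h <;> linarith
  have h2 : (CW n).countP (fun q : ℚ => decide (((q + 1 : ℚ) : ℝ) ≤ x)) = 0 := by
    rw [List.countP_eq_zero]
    intro q hq
    have h0 : (0 : ℝ) < q := by exact_mod_cast CW_pos n q hq
    simp only [decide_eq_true_eq]
    push_cast
    linarith
  simp only [Fcw_eq]
  rw [CW, countP_flat]
  rw [h1, h2]
  push_cast
  field_simp
  ring

lemma Fcw_zero (n : ℕ) : Fcw n 0 = 0 := by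
  classical
  have h2 : (CW n).countP (fun q : ℚ => decide ((q : ℝ) ≤ 0)) = 0 := by
    rw [List.countP_eq_zero]
    intro q hq
    have h0 : (0 : ℝ) < q := by exact_mod_cast CW_pos n q hq
    simp only [decide_eq_true_eq]
    linarith
  rw [Fcw_eq, h2]
  simp

lemma Fcw_mem (n : ℕ) (x : ℝ) : 0 ≤ Fcw n x ∧ Fcw n x ≤ 1 := by
  classical
  rw [Fcw_eq]
  refine ⟨by positivity, ?_⟩
  rw [div_le_one (by positivity)]
  have := List.countP_le_length (p := fun q : ℚ => decide ((q : ℝ) ≤ x)) (l := CW n)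
  rw [CW_length] at this
  exact_mod_cast this

section
variable {F : ℝ → ℝ}

lemma F_zero (hF : ∀ x : ℝ, 0 ≤ x → Tendsto (fun n => Fcw n x) atTop (nhds (F x))) :
    F 0 = 0 := by
  have := hF 0 le_rfl
  simp only [Fcw_zero] at this
  exact tendsto_nhds_unique this tendsto_const_nhds

lemma F_mem (hF : ∀ x : ℝ, 0 ≤ x → Tendsto (fun n => Fcw n x) atTop (nhds (F x)))
    (x : ℝ) (hx : 0 ≤ x) : 0 ≤ F x ∧ F x ≤ 1 :=
  ⟨ge_of_tendsto' (hF x hx) (fun n => (Fcw_mem n x).1),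
    le_of_tendsto' (hF x hx) (fun n => (Fcw_mem n x).2)⟩

lemma F_ge (hF : ∀ x : ℝ, 0 ≤ x → Tendsto (fun n => Fcw n x) atTop (nhds (F x)))
    (x : ℝ) (hx : 1 ≤ x) : F x = (1 + F (x - 1)) / 2 := by
  have h1 := (hF x (by linarith)).comp (tendsto_add_atTop_nat 1)
  have h2 := ((hF (x - 1) (by linarith)).const_add 1).div_const 2
  refine tendsto_nhds_unique h1 (h2.congr fun n => ?_)
  simp [Fcw_ge_one n x hx]

lemma F_lt (hF : ∀ x : ℝ, 0 ≤ x → Tendsto (fun n => Fcw n x) atTop (nhds (F x)))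
    (x : ℝ) (h0 : 0 ≤ x) (hx : x < 1) : F x = F (x / (1 - x)) / 2 := by
  have h1 := (hF x h0).comp (tendsto_add_atTop_nat 1)
  have h2 := (hF (x / (1 - x)) (div_nonneg h0 (by linarith))).div_const 2
  refine tendsto_nhds_unique h1 (h2.congr fun n => ?_)
  simp [Fcw_lt_one n x hx]

lemma F_nat (hF : ∀ x : ℝ, 0 ≤ x → Tendsto (fun n => Fcw n x) atTop (nhds (F x)))
    (k : ℕ) : F k = 1 - (1 / 2) ^ k := by
  induction k with
  | zero => simp [F_zero hF]
  | succ k ih =>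
    rw [F_ge hF _ (by push_cast; linarith [(Nat.cast_nonneg k : (0 : ℝ) ≤ k)])]
    push_cast
    rw [add_sub_cancel_right, ih, pow_succ]
    ring

lemma F_one (hF : ∀ x : ℝ, 0 ≤ x → Tendsto (fun n => Fcw n x) atTop (nhds (F x))) :
    F 1 = 1 / 2 := by
  have := F_nat hF 1
  norm_num at this
  linarith

lemma F_symm_bound (hF : ∀ x : ℝ, 0 ≤ x → Tendsto (fun n => Fcw n x) atTop (nhds (F x)))
    (n : ℕ) : ∀ x : ℝ, 0 < x → |F x + F x⁻¹ - 1| ≤ (1 / 2) ^ n := by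
  induction n with
  | zero =>
    intro x hx
    have h1 := F_mem hF x hx.le
    have h2 := F_mem hF x⁻¹ (by positivity)
    rw [pow_zero, abs_le]
    constructor <;> linarith
  | succ n ih =>
    have key : ∀ x : ℝ, 1 < x → |F x + F x⁻¹ - 1| ≤ (1 / 2) ^ (n + 1) := by
      intro x hx
      have e1 := F_ge hF x hx.le
      have e2 := F_lt hF x⁻¹ (by positivity) (inv_lt_one_of_one_lt₀ hx)
      have e3 : x⁻¹ / (1 - x⁻¹) = (x - 1)⁻¹ := by
        have : x - 1 ≠ 0 := by linarith
        have : x ≠ 0 := by linarith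
        field_simp
      have h := ih (x - 1) (by linarith)
      rw [e1, e2, e3, pow_succ]
      rw [abs_le] at h ⊢
      constructor <;> linarith [h.1, h.2]
    intro x hx
    rcases lt_trichotomy x 1 with h | h | h
    · have := key x⁻¹ ((one_lt_inv₀ hx).2 h)
      rw [inv_inv] at this
      rwa [add_comm (F x)]
    · subst h
      rw [inv_one, F_one hF]
      norm_num
    · exact key x h

lemma tendsto_half : Tendsto (fun n : ℕ => ((1 : ℝ) / 2) ^ n) atTop (nhds 0) :=
  tendsto_pow_atTop_nhds_zero_of_lt_one (by norm_num) (by norm_num)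

lemma F_symm (hF : ∀ x : ℝ, 0 ≤ x → Tendsto (fun n => Fcw n x) atTop (nhds (F x)))
    (x : ℝ) (hx : 0 < x) : F x + F x⁻¹ = 1 := by
  have := ge_of_tendsto' tendsto_half (fun n => F_symm_bound hF n x hx)
  have := abs_nonpos_iff.1 this
  linarith

lemma F_left (hF : ∀ x : ℝ, 0 ≤ x → Tendsto (fun n => Fcw n x) atTop (nhds (F x)))
    (n : ℕ) : ∀ x : ℝ, 0 < x → ∃ y, 0 ≤ y ∧ y < x ∧ F x - F y ≤ (1 / 2) ^ n := by
  induction n with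
  | zero =>
    intro x hx
    refine ⟨0, le_rfl, hx, ?_⟩
    rw [F_zero hF]
    linarith [F_mem hF x hx.le]
  | succ n ih =>
    intro x hx
    rcases lt_trichotomy x 1 with h | h | h
    · obtain ⟨y, h0, h1, h2⟩ := ih (x / (1 - x)) (div_pos hx (by linarith))
      have hy : y / (1 + y) < 1 := by rw [div_lt_one (by linarith)]; linarith
      have e : y / (1 + y) / (1 - y / (1 + y)) = y := by
        have : 1 + y ≠ 0 := by linarith
        field_simp
        ring
      refine ⟨y / (1 + y), by positivity, ?_, ?_⟩
      · rw [lt_div_iff₀ (by linarith)] at h1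
        rw [div_lt_iff₀ (by linarith)]
        linarith
      · rw [F_lt hF x hx.le h, F_lt hF (y / (1 + y)) (by positivity) hy, e, pow_succ]
        linarith
    · subst h
      have hn : (0 : ℝ) ≤ n := Nat.cast_nonneg n
      have hy : (n : ℝ) / (1 + n) < 1 := by rw [div_lt_one (by linarith)]; linarith
      have e : (n : ℝ) / (1 + n) / (1 - n / (1 + n)) = n := by
        have : 1 + (n : ℝ) ≠ 0 := by linarith
        field_simp
        ring
      refine ⟨n / (1 + n), by positivity, hy, ?_⟩
      rw [F_lt hF _ (by positivity) hy, e, F_one hF, F_nat hF, pow_succ]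
      linarith
    · obtain ⟨y, h0, h1, h2⟩ := ih (x - 1) (by linarith)
      refine ⟨y + 1, by linarith, by linarith, ?_⟩
      rw [F_ge hF x h.le, F_ge hF (y + 1) (by linarith), pow_succ, add_sub_cancel_right]
      linarith

lemma mu_Iic_zero (hF : ∀ x : ℝ, 0 ≤ x → Tendsto (fun n => Fcw n x) atTop (nhds (F x)))
    (μ : Measure ℝ) (hprob : IsProbabilityMeasure μ)
    (hμ : ∀ a b : ℝ, a ≤ b → μ (Set.Ioc a b) = ENNReal.ofReal (F b - F a)) :
    μ.real (Set.Iic 0) = 0 := by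
  have h : ∀ n : ℕ, μ.real (Set.Iic 0) ≤ (1 / 2) ^ n := by
    intro n
    have hn : (0 : ℝ) ≤ n := Nat.cast_nonneg n
    have h1 : μ.real (Set.Ioc 0 (n : ℝ)) = 1 - (1 / 2) ^ n := by
      rw [measureReal_def, hμ 0 n hn, F_zero hF, sub_zero,
        ENNReal.toReal_ofReal (F_mem hF n hn).1, F_nat hF]
    have h2 : μ.real (Set.Iic 0 ∪ Set.Ioc 0 (n : ℝ)) =
        μ.real (Set.Iic 0) + μ.real (Set.Ioc 0 (n : ℝ)) := by
      apply measureReal_union _ measurableSet_Ioc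
      rw [Set.disjoint_left]
      intro a ha hb
      exact absurd hb.1 (not_lt.2 ha)
    have h3 : μ.real (Set.Iic 0 ∪ Set.Ioc 0 (n : ℝ)) ≤ 1 := measureReal_le_one
    linarith
  exact le_antisymm (ge_of_tendsto' tendsto_half h) measureReal_nonneg

lemma mu_Iic (hF : ∀ x : ℝ, 0 ≤ x → Tendsto (fun n => Fcw n x) atTop (nhds (F x)))
    (μ : Measure ℝ) (hprob : IsProbabilityMeasure μ)
    (hμ : ∀ a b : ℝ, a ≤ b → μ (Set.Ioc a b) = ENNReal.ofReal (F b - F a))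
    (x : ℝ) (hx : 0 ≤ x) : μ.real (Set.Iic x) = F x := by
  have h2 : μ.real (Set.Iic 0 ∪ Set.Ioc 0 x) =
      μ.real (Set.Iic 0) + μ.real (Set.Ioc 0 x) := by
    apply measureReal_union _ measurableSet_Ioc
    rw [Set.disjoint_left]
    intro a ha hb
    exact absurd hb.1 (not_lt.2 ha)
  rw [Set.Iic_union_Ioc_eq_Iic hx] at h2
  rw [h2, mu_Iic_zero hF μ hprob hμ, measureReal_def, hμ 0 x hx, F_zero hF, sub_zero,
        ENNReal.toReal_ofReal (F_mem hF x hx).1, zero_add]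

lemma mu_singleton (hF : ∀ x : ℝ, 0 ≤ x → Tendsto (fun n => Fcw n x) atTop (nhds (F x)))
    (μ : Measure ℝ) (hprob : IsProbabilityMeasure μ)
    (hμ : ∀ a b : ℝ, a ≤ b → μ (Set.Ioc a b) = ENNReal.ofReal (F b - F a))
    (x : ℝ) (hx : 0 < x) : μ.real {x} = 0 := by
  have h : ∀ n : ℕ, μ.real {x} ≤ (1 / 2) ^ n := by
    intro n
    obtain ⟨y, h0, h1, h2⟩ := F_left hF n x hx
    calc μ.real {x} ≤ μ.real (Set.Ioc y x) :=
          measureReal_mono (by simpa using h1)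
      _ ≤ (1 / 2) ^ n := by
          rw [measureReal_def, hμ y x h1.le]
          exact ENNReal.toReal_le_of_le_ofReal (by positivity) (ENNReal.ofReal_le_ofReal h2)
  exact le_antisymm (ge_of_tendsto' tendsto_half h) measureReal_nonneg

lemma mu_inv (hF : ∀ x : ℝ, 0 ≤ x → Tendsto (fun n => Fcw n x) atTop (nhds (F x)))
    (μ : Measure ℝ) (hprob : IsProbabilityMeasure μ)
    (hμ : ∀ a b : ℝ, a ≤ b → μ (Set.Ioc a b) = ENNReal.ofReal (F b - F a)) :
    μ.map (fun x : ℝ => x⁻¹) = μ := by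
  have hm : Measurable (fun x : ℝ => x⁻¹) := measurable_inv
  have : IsProbabilityMeasure (μ.map (fun x : ℝ => x⁻¹)) :=
    Measure.isProbabilityMeasure_map hm.aemeasurable
  have z := mu_Iic_zero hF μ hprob hμ
  apply Measure.ext_of_Iic
  intro x
  rw [← measureReal_eq_measureReal_iff, map_measureReal_apply hm measurableSet_Iic]
  rcases le_or_gt x 0 with hx | hx
  · have h1 : μ.real (Set.Iic x) ≤ μ.real (Set.Iic 0) :=
      measureReal_mono (Set.Iic_subset_Iic.2 hx)
    have h2 : μ.real ((fun x : ℝ => x⁻¹) ⁻¹' Set.Iic x) ≤ μ.real (Set.Iic 0) := by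
      refine measureReal_mono ?_
      intro y hy
      have hy : y⁻¹ ≤ x := hy
      exact inv_nonpos.1 (hy.trans hx)
    have h3 : 0 ≤ μ.real (Set.Iic x) := measureReal_nonneg
    have h4 : 0 ≤ μ.real ((fun x : ℝ => x⁻¹) ⁻¹' Set.Iic x) := measureReal_nonneg
    linarith
  · have hx' : 0 < x⁻¹ := inv_pos.2 hx
    have e : (fun x : ℝ => x⁻¹) ⁻¹' Set.Iic x =
        (Set.Iic 0 ∪ {x⁻¹}) ∪ (Set.Iic x⁻¹)ᶜ := by
      ext y
      simp only [Set.mem_preimage, Set.mem_Iic, Set.mem_union, Set.mem_singleton_iff,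
        Set.mem_compl_iff, not_le]
      constructor
      · intro h
        rcases le_or_gt y 0 with h0 | h0
        · exact Or.inl (Or.inl h0)
        · have := inv_le_of_inv_le₀ h0 h
          rcases this.lt_or_eq with h | h
          · exact Or.inr h
          · exact Or.inl (Or.inr h.symm)
      · rintro ((h | h) | h)
        · exact (inv_nonpos.2 h).trans hx.le
        · rw [h, inv_inv]
        · exact inv_le_of_inv_le₀ hx h.le
    have hc : μ.real (Set.Iic x⁻¹)ᶜ = F x := by
      rw [probReal_compl_eq_one_sub measurableSet_Iic, mu_Iic hF μ hprob hμ _ hx'.le]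
      linarith [F_symm hF x hx]
    rw [mu_Iic hF μ hprob hμ x hx.le, e]
    apply le_antisymm
    · have h1 := measureReal_union_le (μ := μ) (Set.Iic 0 ∪ {x⁻¹}) (Set.Iic x⁻¹)ᶜ
      have h2 := measureReal_union_le (μ := μ) (Set.Iic 0) {x⁻¹}
      have h3 := mu_singleton hF μ hprob hμ x⁻¹ hx'
      linarith
    · rw [← hc]
      exact measureReal_mono Set.subset_union_right

end

/-- Let `F` be the limit distribution function of the Calkin–Wilf tree and `μ`
its Lebesgue–Stieltjes (probability) measure, so that `μ(a,b] = F(b) − F(a)`.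
With `m_k = ∫ (x/(x+1))^k dμ`, the reflection symmetry of `F` gives
`m_L = ∑_{s=0}^{L} C(L,s)·(−1)^s·m_s` for every `L ≥ 0`, equivalently
`∫ (x/(x+1))^L dμ = ∫ (x+1)^(−L) dμ`; in particular `m₀ = 1` and `m₁ = 1/2`. -/
theorem calkin_wilf_m_reflection (F : ℝ → ℝ)
    (hF : ∀ x : ℝ, 0 ≤ x → Tendsto (fun n => Fcw n x) atTop (nhds (F x)))
    (μ : Measure ℝ) (hprob : IsProbabilityMeasure μ)
    (hμ : ∀ a b : ℝ, a ≤ b → μ (Set.Ioc a b) = ENNReal.ofReal (F b - F a)) :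
    (∀ L : ℕ, ∫ x, (x / (x + 1)) ^ L ∂μ =
      ∑ s ∈ Finset.range (L + 1),
        (L.choose s : ℝ) * (-1 : ℝ) ^ s * ∫ x, (x / (x + 1)) ^ s ∂μ) ∧
    (∀ L : ℕ, ∫ x, (x / (x + 1)) ^ L ∂μ = ∫ x, (x + 1) ^ (-(L : ℤ)) ∂μ) ∧
    (∫ x, (x / (x + 1)) ^ (0 : ℕ) ∂μ) = 1 ∧
    (∫ x, (x / (x + 1)) ^ (1 : ℕ) ∂μ) = 1 / 2 := by
  have hpos : ∀ᵐ x ∂μ, 0 < x := by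
    have z := mu_Iic_zero hF μ hprob hμ
    rw [measureReal_eq_zero_iff] at z
    rw [ae_iff]
    convert z using 2
    ext y
    simp
  have hint : ∀ s : ℕ, Integrable (fun x : ℝ => (x / (x + 1)) ^ s) μ := by
    intro s
    apply Integrable.of_bound (C := 1)
    · exact (Measurable.pow_const (by fun_prop) s).aestronglyMeasurable
    · filter_upwards [hpos] with x hx
      have h1 : x / (x + 1) ≤ 1 := by rw [div_le_one (by linarith)]; linarith
      have h0 : 0 ≤ x / (x + 1) := by positivity
      rw [Real.norm_of_nonneg (by positivity)]
      exact pow_le_one₀ h0 h1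
  have hB : ∀ L : ℕ, ∫ x, (x / (x + 1)) ^ L ∂μ = ∫ x, (x + 1) ^ (-(L : ℤ)) ∂μ := by
    intro L
    have h := mu_inv hF μ hprob hμ
    conv_lhs => rw [← h]
    rw [integral_map measurable_inv.aemeasurable
      (Measurable.pow_const (by fun_prop) L).aestronglyMeasurable]
    apply integral_congr_ae
    filter_upwards [hpos] with x hx
    have h1 : x⁻¹ / (x⁻¹ + 1) = (x + 1)⁻¹ := by
      field_simp
      ring
    simp only [h1, zpow_neg, zpow_natCast, inv_pow]
  have hA : ∀ L : ℕ, ∫ x, (x / (x + 1)) ^ L ∂μ =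
      ∑ s ∈ Finset.range (L + 1),
        (L.choose s : ℝ) * (-1 : ℝ) ^ s * ∫ x, (x / (x + 1)) ^ s ∂μ := by
    intro L
    rw [hB L]
    simp_rw [← integral_const_mul]
    rw [← integral_finsetSum _ (fun s _ => (hint s).const_mul _)]
    apply integral_congr_ae
    filter_upwards [hpos] with x hx
    have h1 : (x + 1)⁻¹ = -(x / (x + 1)) + 1 := by
      field_simp
      ring
    rw [zpow_neg, zpow_natCast, ← inv_pow, h1, add_pow]
    apply Finset.sum_congr rfl
    intro s _
    rw [neg_pow, one_pow]
    ring
  have h0 : (∫ x, (x / (x + 1)) ^ (0 : ℕ) ∂μ) = 1 := by simp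
  refine ⟨hA, hB, h0, ?_⟩
  have h := hA 1
  rw [Finset.sum_range_succ, Finset.sum_range_one, h0] at h
  norm_num at h ⊢
  linarith
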